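/- (S-level-minus-link pairs) Let n ≥ 3, let l₁ = aₙ and l₂ = b₁ be the two link elements of M_{n,n}, and let x ∈ {a₁,…,aₙ} ∖ {aₙ}. If S = {b₁,…,bₙ} ∖ {b₁} and T = {l₁, l₂, x}, then (S, T) is a maximal ST-pair of M_{n,n}. Dually, if y ∈ {b₁,…,bₙ} ∖ {b₁}, S = {a₁,…,aₙ} ∖ {aₙ} and T = {l₁, l₂, y}, then (S, T) is a maximal ST-pair of M_{n,n}. -/

import Mathlib

set_option linter.unreachableTactic false
set_option linter.unusedTactic false
set_option linter.unnecessarySeqFocus false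

/-- The underlying set of the lattice `M_{n,n}`: a bottom element `0`, a top
element `1`, and two levels `a₁, …, aₙ` and `b₁, …, bₙ`.  Here `a i` (for
`i : Fin n`) stands for `a_{i+1}` and `b j` for `b_{j+1}`, so the link elements
are `aₙ = a ⟨n-1, _⟩` and `b₁ = b ⟨0, _⟩`. -/
inductive Mnn (n : ℕ) : Type where
  | bot : Mnn n
  | top : Mnn n
  | a : Fin n → Mnn n
  | b : Fin n → Mnn n
deriving DecidableEq

namespace Mnn

/-- The order of `M_{n,n}`: `0` is least, `1` is greatest, `aᵢ ≤ b₁` for every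
`i`, `aₙ ≤ bⱼ` for every `j`, and there are no other comparabilities besides
those forced by reflexivity. -/
def le {n : ℕ} : Mnn n → Mnn n → Prop
  | .bot, _ => True
  | .top, .top => True
  | .top, .bot => False
  | .top, .a _ => False
  | .top, .b _ => False
  | .a _, .top => True
  | .a _, .bot => False
  | .a i, .a j => i = j
  | .a i, .b j => (j : ℕ) = 0 ∨ (i : ℕ) = n - 1
  | .b _, .top => True
  | .b _, .bot => False
  | .b _, .a _ => False
  | .b i, .b j => i = j

/-- The join operation of `M_{n,n}`. -/
def sup {n : ℕ} : Mnn n → Mnn n → Mnn n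
  | .bot, x => x
  | .top, _ => .top
  | .a i, .bot => .a i
  | .a _, .top => .top
  | .a i, .a j => if i = j then .a i else .b ⟨0, Nat.lt_of_le_of_lt (Nat.zero_le _) i.isLt⟩
  | .a i, .b j => if (j : ℕ) = 0 ∨ (i : ℕ) = n - 1 then .b j else .top
  | .b i, .bot => .b i
  | .b _, .top => .top
  | .b i, .a j => if (i : ℕ) = 0 ∨ (j : ℕ) = n - 1 then .b i else .top
  | .b i, .b j => if i = j then .b i else .top

/-- The meet operation of `M_{n,n}`. -/
def inf {n : ℕ} : Mnn n → Mnn n → Mnn n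
  | .bot, _ => .bot
  | .top, x => x
  | .a _, .bot => .bot
  | .a i, .top => .a i
  | .a i, .a j => if i = j then .a i else .bot
  | .a i, .b j => if (j : ℕ) = 0 ∨ (i : ℕ) = n - 1 then .a i else .bot
  | .b _, .bot => .bot
  | .b i, .top => .b i
  | .b i, .a j => if (i : ℕ) = 0 ∨ (j : ℕ) = n - 1 then .a j else .bot
  | .b i, .b j => if i = j then .b i
      else .a ⟨n - 1, Nat.sub_lt (Nat.lt_of_le_of_lt (Nat.zero_le _) i.isLt) Nat.one_pos⟩

theorem le_refl' {n : ℕ} (x : Mnn n) : le x x := by cases x <;> simp [le]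

theorem le_trans' {n : ℕ} (x y z : Mnn n) (hxy : le x y) (hyz : le y z) : le x z := by
  cases x <;> cases y <;> cases z <;> simp_all [le] <;> omega

theorem le_antisymm' {n : ℕ} (x y : Mnn n) (hxy : le x y) (hyx : le y x) : x = y := by
  cases x <;> cases y <;> simp_all [le]

theorem le_sup_left' {n : ℕ} (x y : Mnn n) : le x (sup x y) := by
  cases x <;> cases y <;> dsimp only [sup] <;> (try split_ifs) <;> simp_all [le]

theorem le_sup_right' {n : ℕ} (x y : Mnn n) : le y (sup x y) := by
  cases x <;> cases y <;> dsimp only [sup] <;> (try split_ifs) <;> simp_all [le]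

theorem sup_le' {n : ℕ} (x y z : Mnn n) (hxz : le x z) (hyz : le y z) :
    le (sup x y) z := by
  cases x <;> cases y <;> cases z <;> dsimp only [sup] <;> (try split_ifs) <;>
    simp_all [le, Fin.ext_iff] <;> omega

theorem inf_le_left' {n : ℕ} (x y : Mnn n) : le (inf x y) x := by
  cases x <;> cases y <;> dsimp only [inf] <;> (try split_ifs) <;> simp_all [le]

theorem inf_le_right' {n : ℕ} (x y : Mnn n) : le (inf x y) y := by
  cases x <;> cases y <;> dsimp only [inf] <;> (try split_ifs) <;> simp_all [le]

theorem le_inf' {n : ℕ} (x y z : Mnn n) (hxy : le x y) (hxz : le x z) :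
    le x (inf y z) := by
  cases x <;> cases y <;> cases z <;> dsimp only [inf] <;> (try split_ifs) <;>
    simp_all [le, Fin.ext_iff] <;> omega

/-- `M_{n,n}` is a lattice. -/
instance instLattice (n : ℕ) : Lattice (Mnn n) where
  le := le
  sup := sup
  inf := inf
  le_refl := le_refl'
  le_trans := le_trans'
  le_antisymm := le_antisymm'
  le_sup_left := le_sup_left'
  le_sup_right := le_sup_right'
  sup_le := sup_le'
  inf_le_left := inf_le_left'
  inf_le_right := inf_le_right'
  le_inf := le_inf'

/-- `M_{n,n}* = M_{n,n} ∖ {0, 1}`, the set of non-identity elements. -/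
def star (n : ℕ) : Set (Mnn n) := {x | x ≠ .bot ∧ x ≠ .top}

/-- The level `{a₁, …, aₙ}` of `M_{n,n}`. -/
def aLevel (n : ℕ) : Set (Mnn n) := Set.range Mnn.a

/-- The level `{b₁, …, bₙ}` of `M_{n,n}`. -/
def bLevel (n : ℕ) : Set (Mnn n) := Set.range Mnn.b

/-- The link element `aₙ` of the level `{a₁, …, aₙ}`. -/
def aLink (n : ℕ) (h : 0 < n) : Mnn n := .a ⟨n - 1, Nat.sub_lt h Nat.one_pos⟩

/-- The link element `b₁` of the level `{b₁, …, bₙ}`. -/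
def bLink (n : ℕ) (h : 0 < n) : Mnn n := .b ⟨0, h⟩

end Mnn

/-- `L` is `ST`-meet distributive. -/
def IsSTMeetDistrib {α : Type*} [Lattice α] (S T : Set α) : Prop :=
  ∀ s ∈ S, ∀ t₁ ∈ T, ∀ t₂ ∈ T, s ⊓ (t₁ ⊔ t₂) = (s ⊓ t₁) ⊔ (s ⊓ t₂)

/-- `L` is `ST`-join distributive. -/
def IsSTJoinDistrib {α : Type*} [Lattice α] (S T : Set α) : Prop :=
  ∀ s ∈ S, ∀ t₁ ∈ T, ∀ t₂ ∈ T, s ⊔ (t₁ ⊓ t₂) = (s ⊔ t₁) ⊓ (s ⊔ t₂)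

/-- `L` is `ST`-distributive. -/
def IsSTDistrib {α : Type*} [Lattice α] (S T : Set α) : Prop :=
  IsSTMeetDistrib S T ∧ IsSTJoinDistrib S T

/-- `(S, T)` is a maximal `ST`-pair of `M_{n,n}` (subject to the conditions of
the search problem: `S, T ⊆ M_{n,n}*`, `S ∩ T = ∅`, `S ≠ ∅`, `T ≠ ∅`). -/
def MaximalSTPair (n : ℕ) (S T : Set (Mnn n)) : Prop :=
  S ⊆ Mnn.star n ∧ T ⊆ Mnn.star n ∧ S ∩ T = ∅ ∧ S.Nonempty ∧ T.Nonempty ∧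
  IsSTDistrib S T ∧
  (¬ ∃ S' : Set (Mnn n), S ⊂ S' ∧ S' ⊆ Mnn.star n ∧ S' ∩ T = ∅ ∧ IsSTDistrib S' T) ∧
  (¬ ∃ T' : Set (Mnn n), T ⊂ T' ∧ T' ⊆ Mnn.star n ∧ S ∩ T' = ∅ ∧ IsSTDistrib S T')

theorem IsSTDistrib.mono {α : Type*} [Lattice α] {S S' T T' : Set α} (hS : S ⊆ S') (hT : T ⊆ T')
    (h : IsSTDistrib S' T') : IsSTDistrib S T :=
  ⟨fun s hs t₁ h₁ t₂ h₂ => h.1 s (hS hs) t₁ (hT h₁) t₂ (hT h₂),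
    fun s hs t₁ h₁ t₂ h₂ => h.2 s (hS hs) t₁ (hT h₁) t₂ (hT h₂)⟩

/-- Maximality only needs to be tested on extensions by a single element. -/
theorem MaximalSTPair.of_insert {n : ℕ} {S T : Set (Mnn n)} (hS : S ⊆ Mnn.star n)
    (hT : T ⊆ Mnn.star n) (hST : Disjoint S T) (hSne : S.Nonempty) (hTne : T.Nonempty)
    (h : IsSTDistrib S T)
    (hmax : ∀ x ∈ Mnn.star n, x ∉ S → x ∉ T → ¬ IsSTDistrib {x} T ∧ ¬ IsSTDistrib S (insert x T)) :
    MaximalSTPair n S T := by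
  refine ⟨hS, hT, hST.inter_eq, hSne, hTne, h, ?_, ?_⟩
  · rintro ⟨S', hSS', hS', hdisj, hd⟩
    obtain ⟨x, hx, hxS⟩ := Set.exists_of_ssubset hSS'
    have hxT : x ∉ T := fun hxT => Set.eq_empty_iff_forall_notMem.1 hdisj x ⟨hx, hxT⟩
    exact (hmax x (hS' hx) hxS hxT).1 (hd.mono (Set.singleton_subset_iff.2 hx) subset_rfl)
  · rintro ⟨T', hTT', hT', hdisj, hd⟩
    obtain ⟨x, hx, hxT⟩ := Set.exists_of_ssubset hTT'
    have hxS : x ∉ S := fun hxS => Set.eq_empty_iff_forall_notMem.1 hdisj x ⟨hxS, hx⟩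
    exact (hmax x (hT' hx) hxS hxT).2
      (hd.mono subset_rfl (Set.insert_subset hx hTT'.subset))

namespace Mnn

variable {n : ℕ}

theorem sup_def (x y : Mnn n) : x ⊔ y = sup x y := rfl

theorem inf_def (x y : Mnn n) : x ⊓ y = inf x y := rfl

theorem isSTDistrib_bLevel_diff (h : 0 < n) {i : Fin n} (hi : a i ≠ aLink n h) :
    IsSTDistrib (bLevel n \ {bLink n h}) {aLink n h, bLink n h, a i} := by
  constructor <;> rintro _ ⟨⟨j, rfl⟩, hj⟩ t₁ (rfl | rfl | rfl) t₂ (rfl | rfl | rfl) <;>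
    simp_all [sup_def, inf_def, aLink, bLink, sup, inf, Fin.ext_iff, eq_comm]

theorem isSTDistrib_aLevel_diff (h : 0 < n) {j : Fin n} (hj : b j ≠ bLink n h) :
    IsSTDistrib (aLevel n \ {aLink n h}) {aLink n h, bLink n h, b j} := by
  constructor <;> rintro _ ⟨⟨i, rfl⟩, hi⟩ t₁ (rfl | rfl | rfl) t₂ (rfl | rfl | rfl) <;>
    simp_all [sup_def, inf_def, aLink, bLink, sup, inf, Fin.ext_iff, eq_comm]

theorem maximalSTPair_bLevel_diff (hn : 2 ≤ n) {i : Fin n} (hi : a i ≠ aLink n (by omega)) :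
    MaximalSTPair n (bLevel n \ {bLink n (by omega)})
      {aLink n (by omega), bLink n (by omega), a i} := by
  have hmem : b ⟨1, hn⟩ ∈ bLevel n \ {bLink n (by omega)} := by simp [bLevel, bLink]
  refine .of_insert ?_ ?_ ?_ ⟨_, hmem⟩ ⟨_, Set.mem_insert _ _⟩ (isSTDistrib_bLevel_diff _ hi) ?_
  · rintro _ ⟨⟨j, rfl⟩, -⟩
    simp [star]
  · rintro _ (rfl | rfl | rfl) <;> simp [star, aLink, bLink]
  · rw [Set.disjoint_left]
    rintro _ ⟨⟨j, rfl⟩, hj⟩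
    simp_all [aLink]
  · rintro (_ | _ | k | k) hx hxS hxT
    · simp [star] at hx
    · simp [star] at hx
    · refine ⟨fun h => ?_, fun h => ?_⟩
      · have := h.1 (a k) rfl (aLink n (by omega)) (by simp) (a i) (by simp)
        simp_all [sup_def, inf_def, aLink, bLink, sup, inf, Fin.ext_iff, eq_comm]
      · have := h.1 _ hmem (a k) (by simp) (a i) (by simp)
        simp_all [sup_def, inf_def, aLink, bLink, sup, inf, Fin.ext_iff, eq_comm]
    · simp_all [bLevel]

theorem maximalSTPair_aLevel_diff (hn : 2 ≤ n) {j : Fin n} (hj : b j ≠ bLink n (by omega)) :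
    MaximalSTPair n (aLevel n \ {aLink n (by omega)})
      {aLink n (by omega), bLink n (by omega), b j} := by
  have hmem : a ⟨0, by omega⟩ ∈ aLevel n \ {aLink n (by omega)} := by
    simp [aLevel, aLink]
    omega
  refine .of_insert ?_ ?_ ?_ ⟨_, hmem⟩ ⟨_, Set.mem_insert _ _⟩ (isSTDistrib_aLevel_diff _ hj) ?_
  · rintro _ ⟨⟨i, rfl⟩, -⟩
    simp [star]
  · rintro _ (rfl | rfl | rfl) <;> simp [star, aLink, bLink]
  · rw [Set.disjoint_left]
    rintro _ ⟨⟨i, rfl⟩, hi⟩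
    simp_all [bLink]
  · rintro (_ | _ | k | k) hx hxS hxT
    · simp [star] at hx
    · simp [star] at hx
    · simp_all [aLevel]
    · refine ⟨fun h => ?_, fun h => ?_⟩
      · have := h.2 (b k) rfl (bLink n (by omega)) (by simp) (b j) (by simp)
        simp_all [sup_def, inf_def, aLink, bLink, sup, inf, Fin.ext_iff, eq_comm]
      · have := h.2 _ hmem (b k) (by simp) (b j) (by simp)
        simp_all [sup_def, inf_def, aLink, bLink, sup, inf, Fin.ext_iff, eq_comm]

end Mnn

/-- S-level-minus-link pairs are maximal `ST`-pairs of `M_{n,n}`: `S` is one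
level minus its link, and `T` consists of the two links together with one
non-link element of the other level. -/
theorem s_level_minus_link_maximal (n : ℕ) (hn : 3 ≤ n) :
    (∀ i : Fin n, Mnn.a i ≠ Mnn.aLink n (by omega) →
      MaximalSTPair n (Mnn.bLevel n \ {Mnn.bLink n (by omega)})
        {Mnn.aLink n (by omega), Mnn.bLink n (by omega), Mnn.a i}) ∧
    (∀ j : Fin n, Mnn.b j ≠ Mnn.bLink n (by omega) →
      MaximalSTPair n (Mnn.aLevel n \ {Mnn.aLink n (by omega)})
        {Mnn.aLink n (by omega), Mnn.bLink n (by omega), Mnn.b j}) :=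
  ⟨fun _ hi => Mnn.maximalSTPair_bLevel_diff (by omega) hi,
    fun _ hj => Mnn.maximalSTPair_aLevel_diff (by omega) hj⟩
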